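/- arXiv:2503.23380 — 3 statements merged into one kernel-verified Lean document; each statement's English description precedes it below -/
import Mathlib

section
/- Let f : [0,1]^2 → ℝ be continuous and monotone (i.e. for every t ∈ ℝ the level set f⁻¹(t) is connected). Then f has the relaxed Sard property if and only if f has the weak Sard property. -/
open MeasureTheory Set

noncomputable section

/-- The unit square `[0,1]²` in the Euclidean plane. -/
def unitSquare : Set (EuclideanSpace ℝ (Fin 2)) := {x | ∀ i, x i ∈ Set.Icc (0:ℝ) 1}

/-- The critical set of `f : [0,1]² → ℝ`: points of the square where `f` is either not
differentiable or has vanishing gradient. -/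
def critSet (f : EuclideanSpace ℝ (Fin 2) → ℝ) : Set (EuclideanSpace ℝ (Fin 2)) :=
  {x | x ∈ unitSquare ∧
    (¬ DifferentiableWithinAt ℝ f unitSquare x ∨ fderivWithin ℝ f unitSquare x = 0)}

/-- The set `E* = ⋃ₜ Eₜ*`: the union over `t` of all connected components of the level set
`Eₜ = {f = t}` having strictly positive one-dimensional Hausdorff measure. A point `x` belongs
to `E*` iff the connected component of `x` in its own level set has positive `H¹` measure. -/
def Estar (f : EuclideanSpace ℝ (Fin 2) → ℝ) : Set (EuclideanSpace ℝ (Fin 2)) :=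
  {x | 0 < μH[1] (connectedComponentIn (unitSquare ∩ f ⁻¹' {f x}) x)}

/-!
A connected set with two points has positive `H¹` measure, so when all level sets are connected a
point `x` lies outside `E*` only if its level set is `{x}`. The square minus `x` is still connected,
so by the intermediate value theorem `f - f x` has constant sign on it and `x` is a global extremum.
A minimum and a maximum attained only once account for at most two points, so `S ∩ E*` and `S`
differ by a Lebesgue null set.
-/

theorem edist_le_hausdorffMeasure_one_of_isPreconnected {X : Type*} [MetricSpace X]
    [MeasurableSpace X] [BorelSpace X] {s : Set X} (hs : IsPreconnected s) {x y : X}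
    (hx : x ∈ s) (hy : y ∈ s) : edist x y ≤ μH[1] s := by
  have hlip : LipschitzWith 1 (fun z ↦ dist z y) := LipschitzWith.dist_left y
  have hIcc : Icc 0 (dist x y) ⊆ (fun z ↦ dist z y) '' s := by
    simpa only [dist_self] using hs.intermediate_value hy hx hlip.continuous.continuousOn
  calc edist x y = volume (Icc 0 (dist x y)) := by rw [Real.volume_Icc, sub_zero, edist_dist]
    _ ≤ volume ((fun z ↦ dist z y) '' s) := measure_mono hIcc
    _ = μH[1] ((fun z ↦ dist z y) '' s) := by rw [hausdorffMeasure_real]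
    _ ≤ μH[1] s := by simpa using hlip.hausdorffMeasure_image_le zero_le_one s

theorem hausdorffMeasure_one_pos_of_isPreconnected {X : Type*} [MetricSpace X]
    [MeasurableSpace X] [BorelSpace X] {s : Set X} (hs : IsPreconnected s) (hnt : s.Nontrivial) :
    0 < μH[1] s := by
  obtain ⟨x, hx, y, hy, hxy⟩ := hnt
  exact (edist_pos.2 hxy).trans_le (edist_le_hausdorffMeasure_one_of_isPreconnected hs hx hy)

section Extremum

variable {X α : Type*} [TopologicalSpace X] [LinearOrder α] [TopologicalSpace α]
  [OrderClosedTopology α] {f : X → α} {s : Set X}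

theorem isExtrOn_of_subsingleton_fiber {a : X} (hs : IsPreconnected (s \ {a}))
    (hf : ContinuousOn f (s \ {a})) (ha : a ∈ s) (hfib : (s ∩ f ⁻¹' {f a}).Subsingleton) :
    IsExtrOn f s a := by
  by_contra h
  obtain ⟨hmin, hmax⟩ : ¬ IsMinOn f s a ∧ ¬ IsMaxOn f s a := not_or.1 h
  simp only [isMinOn_iff, isMaxOn_iff, not_forall, not_le, exists_prop] at hmin hmax
  obtain ⟨y, hy, hya⟩ := hmin
  obtain ⟨z, hz, haz⟩ := hmax
  obtain ⟨w, ⟨hws, hwa⟩, hfw⟩ :=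
    hs.intermediate_value ⟨hy, ne_of_apply_ne f hya.ne⟩ ⟨hz, ne_of_apply_ne f haz.ne'⟩ hf
      ⟨hya.le, haz.le⟩
  exact hwa (hfib ⟨hws, hfw⟩ ⟨ha, rfl⟩)

theorem finite_setOf_subsingleton_fiber (hs : ∀ a ∈ s, IsPreconnected (s \ {a}))
    (hf : ContinuousOn f s) : {a ∈ s | (s ∩ f ⁻¹' {f a}).Subsingleton}.Finite := by
  have hmin : {a ∈ s | (s ∩ f ⁻¹' {f a}).Subsingleton ∧ IsMinOn f s a}.Subsingleton := by
    rintro a ⟨ha, hfib, hamin⟩ b ⟨hb, -, hbmin⟩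
    exact hfib ⟨ha, rfl⟩ ⟨hb, le_antisymm (hbmin ha) (hamin hb)⟩
  have hmax : {a ∈ s | (s ∩ f ⁻¹' {f a}).Subsingleton ∧ IsMaxOn f s a}.Subsingleton := by
    rintro a ⟨ha, hfib, hamax⟩ b ⟨hb, -, hbmax⟩
    exact hfib ⟨ha, rfl⟩ ⟨hb, le_antisymm (hamax hb) (hbmax ha)⟩
  refine (hmin.finite.union hmax.finite).subset ?_
  rintro a ⟨ha, hfib⟩
  exact (isExtrOn_of_subsingleton_fiber (hs a ha) (hf.mono sdiff_subset) ha hfib).imp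
    (⟨ha, hfib, ·⟩) (⟨ha, hfib, ·⟩)

end Extremum

theorem isPreconnected_sdiff_singleton_of_convex {E : Type*} [AddCommGroup E] [Module ℝ E]
    [TopologicalSpace E] [ContinuousAdd E] [ContinuousSMul ℝ E] {s : Set E}
    (hs : Convex ℝ s) (hcol : ¬ Collinear ℝ s) (a : E) : IsPreconnected (s \ {a}) := by
  refine isPreconnected_of_forall_pair fun y ⟨hy, hya⟩ w ⟨hw, hwa⟩ ↦ ?_
  by_cases ha : a ∈ segment ℝ y w
  · -- Detour through a point off the line that contains `y`, `a` and `w`.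
    have hyaw : Wbtw ℝ y a w := mem_segment_iff_wbtw.1 ha
    obtain ⟨z, hz, hz_line⟩ : ∃ z ∈ s, z ∉ line[ℝ, y, a] := by
      by_contra! h
      have hline : Collinear ℝ (line[ℝ, y, a] : Set E) := by
        rw [Collinear, ← AffineSubspace.direction_eq_vectorSpan, direction_affineSpan]
        exact collinear_pair ℝ y a
      exact hcol (hline.subset h)
    have hw_line : w ∈ line[ℝ, y, a] := hyaw.right_mem_affineSpan_of_left_ne hya
    have hyz : a ∉ segment ℝ y z := fun h ↦
      hz_line ((mem_segment_iff_wbtw.1 h).right_mem_affineSpan_of_left_ne hya)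
    have hzw : a ∉ segment ℝ z w := fun h ↦
      hz_line (affineSpan_pair_le_of_mem_of_mem hw_line
        (right_mem_affineSpan_pair ℝ y a)
        ((mem_segment_iff_wbtw.1 h).left_mem_affineSpan_of_right_ne hwa))
    exact ⟨segment ℝ y z ∪ segment ℝ z w,
      union_subset (subset_sdiff_singleton (hs.segment_subset hy hz) hyz)
        (subset_sdiff_singleton (hs.segment_subset hz hw) hzw),
      .inl (left_mem_segment ℝ y z), .inr (right_mem_segment ℝ z w),
      (convex_segment y z).isPreconnected.union z (right_mem_segment ℝ y z)
        (left_mem_segment ℝ z w) (convex_segment z w).isPreconnected⟩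
  · exact ⟨segment ℝ y w, subset_sdiff_singleton (hs.segment_subset hy hw) ha,
      left_mem_segment ℝ y w, right_mem_segment ℝ y w, (convex_segment y w).isPreconnected⟩

theorem convex_unitSquare : Convex ℝ unitSquare := by
  intro x hx y hy a b ha hb hab i
  simpa using convex_Icc (0 : ℝ) 1 (hx i) (hy i) ha hb hab

theorem not_collinear_unitSquare : ¬ Collinear ℝ unitSquare := by
  have h₀ : (0 : EuclideanSpace ℝ (Fin 2)) ∈ unitSquare := fun _ ↦ by simp
  have h₁ : !₂[(1 : ℝ), 0] ∈ unitSquare := fun i ↦ by fin_cases i <;> simp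
  have h₂ : !₂[(0 : ℝ), 1] ∈ unitSquare := fun i ↦ by fin_cases i <;> simp
  rw [collinear_iff_of_mem h₀]
  rintro ⟨v, hv⟩
  obtain ⟨r, hr⟩ := hv _ h₁
  obtain ⟨t, ht⟩ := hv _ h₂
  have hr₀ : 1 = r * v 0 := by simpa using congrArg (· 0) hr
  have hr₁ : 0 = r * v 1 := by simpa using congrArg (· 1) hr
  have ht₁ : 1 = t * v 1 := by simpa using congrArg (· 1) ht
  grind

section MonotoneFunction

variable {f : EuclideanSpace ℝ (Fin 2) → ℝ}

theorem subsingleton_fiber_of_notMem_Estar {x : EuclideanSpace ℝ (Fin 2)}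
    (hfib : IsPreconnected (unitSquare ∩ f ⁻¹' {f x})) (hx : x ∈ unitSquare)
    (hxE : x ∉ Estar f) : (unitSquare ∩ f ⁻¹' {f x}).Subsingleton := by
  contrapose! hxE
  rw [Estar, mem_ofPred_eq, hfib.connectedComponentIn ⟨hx, rfl⟩]
  exact hausdorffMeasure_one_pos_of_isPreconnected hfib hxE

theorem finite_unitSquare_sdiff_Estar (hf : ContinuousOn f unitSquare)
    (hmono : ∀ t : ℝ, IsPreconnected (unitSquare ∩ f ⁻¹' {t})) :
    (unitSquare \ Estar f).Finite := by
  have hconn (a) : IsPreconnected (unitSquare \ {a}) :=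
    isPreconnected_sdiff_singleton_of_convex convex_unitSquare not_collinear_unitSquare a
  exact (finite_setOf_subsingleton_fiber (fun a _ ↦ hconn a) hf).subset fun x ⟨hx, hxE⟩ ↦
    ⟨hx, subsingleton_fiber_of_notMem_Estar (hmono (f x)) hx hxE⟩

end MonotoneFunction

/-- For a continuous monotone function `f : [0,1]² → ℝ` (all level sets connected),
the relaxed Sard property `f_#(𝟙_S L²) ⊥ L¹` holds iff the weak Sard property
`f_#(𝟙_{S ∩ E*} L²) ⊥ L¹` holds. -/
theorem relaxed_iff_weak_sard_of_monotone (f : EuclideanSpace ℝ (Fin 2) → ℝ)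
    (hf : ContinuousOn f unitSquare)
    (hmono : ∀ t : ℝ, IsPreconnected (unitSquare ∩ f ⁻¹' {t})) :
    (Measure.map f (volume.restrict (critSet f))).MutuallySingular volume ↔
      (Measure.map f (volume.restrict (critSet f ∩ Estar f))).MutuallySingular volume := by
  have hnull : volume (critSet f \ Estar f) = 0 :=
    ((finite_unitSquare_sdiff_Estar hf hmono).subset
      (sdiff_subset_sdiff_left fun _ hx ↦ hx.1)).measure_zero volume
  have hae : (critSet f ∩ Estar f : Set _) =ᵐ[volume] critSet f := by
    simpa only [sdiff_sdiff_right_self] using sdiff_null_ae_eq_self (s := critSet f) hnull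
  rw [Measure.restrict_congr_set hae]
end
end

section
/- If f : [0,1] → ℝ is Lipschitz continuous, then f has the strong Sard property: L¹(f(S)) = 0, where S is the set of points at which f is either not differentiable or has f'(x) = 0. -/
open MeasureTheory Set

noncomputable section

/-- The critical set of `f : [0,1] → ℝ`: points of `[0,1]` where `f` is either not
differentiable or has zero derivative. -/
def critSet1 (f : ℝ → ℝ) : Set ℝ :=
  {x | x ∈ Set.Icc (0:ℝ) 1 ∧
    (¬ DifferentiableWithinAt ℝ f (Set.Icc (0:ℝ) 1) x ∨
      derivWithin f (Set.Icc (0:ℝ) 1) x = 0)}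

/-- The set of points of `s` at which `f` is not differentiable within `s`, or at which its
derivative within `s` is singular: the analogue of `critSet1` for self-maps of a
finite-dimensional space (in infinite dimension `ContinuousLinearMap.det` takes the junk value `1`).
Where derivatives within `s` are not unique, the one used is that chosen by `fderivWithin`. -/
def critSetWithin {E : Type*} [NormedAddCommGroup E] [NormedSpace ℝ E] (f : E → E) (s : Set E) :
    Set E :=
  {x ∈ s | ¬ DifferentiableWithinAt ℝ f s x ∨ (fderivWithin ℝ f s x).det = 0}

theorem critSetWithin_Icc_eq_critSet1 (f : ℝ → ℝ) :
    critSetWithin f (Icc 0 1) = critSet1 f := by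
  simp only [critSetWithin, critSet1, ← toSpanSingleton_derivWithin,
    ContinuousLinearMap.det_toSpanSingleton]

theorem hausdorffMeasure_image_eq_zero_of_lipschitzOnWith {X Y : Type*}
    [EMetricSpace X] [MeasurableSpace X] [BorelSpace X]
    [EMetricSpace Y] [MeasurableSpace Y] [BorelSpace Y]
    {K : NNReal} {f : X → Y} {s : Set X} {d : ℝ} (hd : 0 ≤ d) (hf : LipschitzOnWith K f s)
    (hs : Measure.hausdorffMeasure d s = 0) : Measure.hausdorffMeasure d (f '' s) = 0 := by
  simpa only [hs, mul_zero, nonpos_iff_eq_zero] using hf.hausdorffMeasure_image_le hd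

section AddHaar

variable {E : Type*} [NormedAddCommGroup E] [NormedSpace ℝ E] [FiniteDimensional ℝ E]
  [MeasurableSpace E] [BorelSpace E] (μ : Measure E) [μ.IsAddHaarMeasure]
  {K : NNReal} {f : E → E} {s : Set E}

theorem addHaar_image_eq_zero_of_lipschitzOnWith (hf : LipschitzOnWith K f s) (hs : μ s = 0) :
    μ (f '' s) = 0 := by
  let ν : Measure E := Measure.hausdorffMeasure (Module.finrank ℝ E)
  have hνs : ν s = 0 := Measure.absolutelyContinuous_isAddHaarMeasure ν μ hs
  exact Measure.absolutelyContinuous_isAddHaarMeasure μ ν <|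
    hausdorffMeasure_image_eq_zero_of_lipschitzOnWith (Nat.cast_nonneg _) hf hνs

theorem addHaar_image_setOf_not_differentiableWithinAt_eq_zero (hf : LipschitzOnWith K f s) :
    μ (f '' {x ∈ s | ¬ DifferentiableWithinAt ℝ f s x}) = 0 := by
  have rademacher : μ {x ∈ s | ¬ DifferentiableWithinAt ℝ f s x} = 0 := by
    simpa only [ae_iff, Classical.not_imp] using hf.ae_differentiableWithinAt_of_mem (μ := μ)
  exact addHaar_image_eq_zero_of_lipschitzOnWith μ (hf.mono (sep_subset _ _)) rademacher

theorem addHaar_image_setOf_det_fderivWithin_eq_zero (f : E → E) (s : Set E) :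
    μ (f '' {x ∈ s | DifferentiableWithinAt ℝ f s x ∧ (fderivWithin ℝ f s x).det = 0}) = 0 :=
  addHaar_image_eq_zero_of_det_fderivWithin_eq_zero μ
    (fun _ hx => hx.2.1.hasFDerivWithinAt.mono (sep_subset _ _)) (fun _ hx => hx.2.2)

theorem lipschitz_strongSard_general (hf : LipschitzOnWith K f s) :
    μ (f '' critSetWithin f s) = 0 := by
  have critSetWithin_subset : critSetWithin f s ⊆
      {x ∈ s | ¬ DifferentiableWithinAt ℝ f s x} ∪
        {x ∈ s | DifferentiableWithinAt ℝ f s x ∧ (fderivWithin ℝ f s x).det = 0} := by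
    rintro x ⟨hxs, hx⟩
    by_cases hdiff : DifferentiableWithinAt ℝ f s x
    · exact .inr ⟨hxs, hdiff, hx.resolve_left (not_not_intro hdiff)⟩
    · exact .inl ⟨hxs, hdiff⟩
  refine measure_mono_null (image_mono critSetWithin_subset) ?_
  rw [image_union]
  exact measure_union_null (addHaar_image_setOf_not_differentiableWithinAt_eq_zero μ hf)
    (addHaar_image_setOf_det_fderivWithin_eq_zero μ f s)

end AddHaar

/-- If `f : [0,1] → ℝ` is Lipschitz continuous, then `f` has the strong Sard property:
`L¹(f(S)) = 0` where `S` is the critical set of `f`. -/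
theorem lipschitz_strongSard (f : ℝ → ℝ) (K : NNReal)
    (hf : LipschitzOnWith K f (Set.Icc (0:ℝ) 1)) :
    volume (f '' critSet1 f) = 0 := by
  rw [← critSetWithin_Icc_eq_critSet1]
  exact lipschitz_strongSard_general volume hf
end
end

section
/- There exist a function f : [0,1]^2 → ℝ belonging to C^{1,α}([0,1]^2) for every α ∈ (0,1), and a compact set K ⊂ [0,1]^2 of positive two-dimensional Lebesgue measure, such that ∇f vanishes on K and, for L²-almost every x ∈ K, the connected component of the level set f⁻¹(f(x)) containing x is the singleton {x}. -/
open MeasureTheory Set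

noncomputable section

/-- `f` is of class `C^{1,α}` on `[0,1]²`: continuously differentiable with gradient
Hölder continuous of exponent `α`. -/
def IsC1Holder (f : EuclideanSpace ℝ (Fin 2) → ℝ) (α : ℝ) : Prop :=
  DifferentiableOn ℝ f unitSquare ∧
  ContinuousOn (fderivWithin ℝ f unitSquare) unitSquare ∧
  ∃ C : ℝ, ∀ x ∈ unitSquare, ∀ y ∈ unitSquare,
    ‖fderivWithin ℝ f unitSquare x - fderivWithin ℝ f unitSquare y‖ ≤ C * dist x y ^ α

/-!
Given a dense set of centres and a dense set of radii, any two points are separated by a sphere with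
such a centre and radius, so the complement of the union of these spheres is totally separated.
An s-finite measure charges only countably many spheres about each centre, so in a separable metric
space the spheres can be chosen null and the complement of their union conull. A compact subset `K`
of that complement with positive measure is the zero set of some smooth `f ≥ 0`; each point of `K`
is a minimum of `f`, hence critical, and the level set through it is `K` itself.
-/

section TotallyDisconnected

theorem connectedComponentIn_eq_singleton_of_isTotallyDisconnected {X : Type*} [TopologicalSpace X]
    {s t : Set X} {x : X} (ht : IsTotallyDisconnected t) (hst : s ⊆ t) (hx : x ∈ s) :
    connectedComponentIn s x = {x} :=
  (ht _ ((connectedComponentIn_subset s x).trans hst)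
    isPreconnected_connectedComponentIn).eq_singleton_of_mem (mem_connectedComponentIn hx)

variable {X : Type*} [MetricSpace X]

theorem isTotallySeparated_compl_iUnion_sphere {D : Set X} {R : Set ℝ} (hD : Dense D)
    (hR : Dense R) : IsTotallySeparated (⋃ d ∈ D, ⋃ r ∈ R, Metric.sphere d r)ᶜ := by
  intro x _ y _ hxy
  obtain ⟨d, hd, hxd⟩ := hD.exists_dist_lt x (half_pos (dist_pos.2 hxy))
  have hdist : dist x d < dist y d := by linarith [dist_triangle_right x y d]
  obtain ⟨r, hr, hxr, hry⟩ := hR.exists_between hdist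
  refine ⟨Metric.ball d r, (Metric.closedBall d r)ᶜ, Metric.isOpen_ball,
    Metric.isClosed_closedBall.isOpen_compl, hxr, not_le.2 hry, fun z hz => ?_,
    disjoint_compl_right.mono_left Metric.ball_subset_closedBall⟩
  have hzr : dist z d ≠ r := fun h => hz (mem_biUnion hd (mem_biUnion hr h))
  exact hzr.lt_or_gt.imp id not_le.2

variable [MeasurableSpace X]

theorem exists_dense_countable_measure_sphere_eq_zero [OpensMeasurableSpace X] (μ : Measure X)
    [SFinite μ] {D : Set X} (hD : D.Countable) :
    ∃ R : Set ℝ, R.Countable ∧ Dense R ∧ ∀ d ∈ D, ∀ r ∈ R, μ (Metric.sphere d r) = 0 := by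
  have hcharged : (⋃ d ∈ D, {r : ℝ | 0 < μ (Metric.sphere d r)}).Countable :=
    hD.biUnion fun d _ =>
      Measure.countable_meas_level_set_pos (continuous_id.dist continuous_const).measurable
  obtain ⟨R, hRnull, hR, hRdense⟩ := (hcharged.dense_compl ℝ).exists_countable_dense_subset
  refine ⟨R, hR, hRdense, fun d hd r hr => ?_⟩
  by_contra h
  exact hRnull hr (mem_biUnion hd (pos_iff_ne_zero.2 h))

theorem exists_measurableSet_isTotallySeparated_measure_compl_eq_zero
    [TopologicalSpace.SeparableSpace X] [OpensMeasurableSpace X] (μ : Measure X) [SFinite μ] :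
    ∃ S : Set X, MeasurableSet S ∧ IsTotallySeparated S ∧ μ Sᶜ = 0 := by
  obtain ⟨D, hD, hDdense⟩ := TopologicalSpace.exists_countable_dense X
  obtain ⟨R, hR, hRdense, hnull⟩ := exists_dense_countable_measure_sphere_eq_zero μ hD
  refine ⟨_, ?_, isTotallySeparated_compl_iUnion_sphere hDdense hRdense, ?_⟩
  · exact (MeasurableSet.biUnion hD fun d _ => MeasurableSet.biUnion hR fun r _ =>
      Metric.isClosed_sphere.measurableSet).compl
  · rw [compl_compl, measure_biUnion_null_iff hD]
    exact fun d hd => (measure_biUnion_null_iff hR).2 (hnull d hd)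

theorem exists_isCompact_isTotallyDisconnected_measure_pos [CompleteSpace X]
    [SecondCountableTopology X] [BorelSpace X] (μ : Measure X) [SFinite μ] {U : Set X}
    (hU : MeasurableSet U) (hμU : μ U ≠ 0) :
    ∃ K ⊆ U, IsCompact K ∧ IsTotallyDisconnected K ∧ 0 < μ K := by
  obtain ⟨S, hS, hSsep, hSnull⟩ := exists_measurableSet_isTotallySeparated_measure_compl_eq_zero μ
  obtain ⟨ν, _, hμν, hνμ⟩ := exists_isFiniteMeasure_absolutelyContinuous μ
  have hpos : 0 < ν (U ∩ S) := by
    rw [measure_inter_conull (hνμ hSnull)]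
    exact pos_iff_ne_zero.2 fun h => hμU (hμν h)
  obtain ⟨K, hKUS, ⟨hK, -⟩, hνK⟩ :=
    innerRegular_isCompact_isClosed_measurableSet_of_finite ν (hU.inter hS) 0 hpos
  exact ⟨K, hKUS.trans inter_subset_left, hK,
    fun t ht => hSsep.isTotallyDisconnected t (ht.trans (hKUS.trans inter_subset_right)),
    pos_iff_ne_zero.2 fun h => hνK.ne' (hνμ h)⟩

end TotallyDisconnected

section UnitSquare

theorem unitSquare_eq_preimage_pi :
    unitSquare = EuclideanSpace.equiv (Fin 2) ℝ ⁻¹' univ.pi fun _ => Icc 0 1 := by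
  ext x
  exact (mem_univ_pi (f := x)).symm

theorem isCompact_unitSquare : IsCompact unitSquare := by
  rw [unitSquare_eq_preimage_pi]
  exact (EuclideanSpace.equiv (Fin 2) ℝ).toHomeomorph.isCompact_preimage.2
    (isCompact_univ_pi fun _ => isCompact_Icc)

theorem nonempty_interior_unitSquare : (interior unitSquare).Nonempty := by
  rw [unitSquare_eq_preimage_pi,
    ← (EuclideanSpace.equiv (Fin 2) ℝ).isOpenMap.preimage_interior_eq_interior_preimage
      (EuclideanSpace.equiv (Fin 2) ℝ).continuous, interior_pi_set finite_univ]
  refine Nonempty.preimage ?_ (EuclideanSpace.equiv (Fin 2) ℝ).surjective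
  simp [univ_pi_nonempty_iff]

theorem uniqueDiffOn_unitSquare : UniqueDiffOn ℝ unitSquare :=
  uniqueDiffOn_convex convex_unitSquare nonempty_interior_unitSquare

end UnitSquare

theorem exists_holderOnWith_fderivWithin {E F : Type*} [NormedAddCommGroup E] [NormedSpace ℝ E]
    [NormedAddCommGroup F] [NormedSpace ℝ F] {f : E → F} {s : Set E} (hf : ContDiffOn ℝ 2 f s)
    (hconv : Convex ℝ s) (hcomp : IsCompact s) (hdiff : UniqueDiffOn ℝ s)
    {r : NNReal} (hr : r ≤ 1) :
    ∃ C, HolderOnWith C r (fderivWithin ℝ f s) s := by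
  have hf' : ContDiffOn ℝ 1 (fderivWithin ℝ f s) s := hf.fderivWithin hdiff one_add_one_eq_two.le
  obtain ⟨L, hL⟩ := hf'.exists_lipschitzOnWith one_ne_zero hconv hcomp
  exact HolderOnWith.exists_holderOnWith_of_le ⟨L, holderOnWith_one.2 hL⟩ hr hcomp.isBounded

theorem isC1Holder_of_contDiffOn {f : EuclideanSpace ℝ (Fin 2) → ℝ} {α : ℝ}
    (hf : ContDiffOn ℝ 2 f unitSquare) (hα : α ∈ Icc 0 1) : IsC1Holder f α := by
  lift α to NNReal using hα.1
  obtain ⟨C, hC⟩ := exists_holderOnWith_fderivWithin hf convex_unitSquare isCompact_unitSquare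
    uniqueDiffOn_unitSquare (NNReal.coe_le_one.1 hα.2)
  refine ⟨hf.differentiableOn two_ne_zero,
    hf.continuousOn_fderivWithin uniqueDiffOn_unitSquare one_le_two, C, fun x hx y hy => ?_⟩
  rw [← dist_eq_norm]
  exact hC.dist_le hx hy

theorem exists_contDiff_nonneg_preimage_zero_eq {E : Type*} [NormedAddCommGroup E]
    [NormedSpace ℝ E] [FiniteDimensional ℝ E] {K : Set E} (hK : IsClosed K) (n : ℕ∞) :
    ∃ f : E → ℝ, ContDiff ℝ n f ∧ 0 ≤ f ∧ f ⁻¹' {0} = K := by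
  obtain ⟨f, hsupp, hf, hrange⟩ := hK.isOpen_compl.exists_contDiff_support_eq (n := n)
  refine ⟨f, hf, fun x => (hrange ⟨x, rfl⟩).1, ?_⟩
  rw [← compl_compl K, ← hsupp, Function.support_eq_preimage, preimage_compl, compl_compl]

open scoped ContDiff in
theorem exists_C1Holder_critical_compact_with_singleton_components_general {E : Type*}
    [NormedAddCommGroup E] [NormedSpace ℝ E] [FiniteDimensional ℝ E] [MeasurableSpace E]
    [BorelSpace E] (μ : Measure E) [SFinite μ] {U : Set E} (hU : MeasurableSet U)
    (hμU : μ U ≠ 0) :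
    ∃ (f : E → ℝ) (K : Set E), ContDiff ℝ ∞ f ∧ IsCompact K ∧ K ⊆ U ∧ 0 < μ K ∧
      (∀ x ∈ K, fderiv ℝ f x = 0) ∧ ∀ x ∈ K, IsTotallyDisconnected (f ⁻¹' {f x}) := by
  have := FiniteDimensional.proper_real E
  obtain ⟨K, hKU, hK, hKdisc, hμK⟩ :=
    exists_isCompact_isTotallyDisconnected_measure_pos μ hU hμU
  obtain ⟨f, hf, hf0, rfl⟩ := exists_contDiff_nonneg_preimage_zero_eq hK.isClosed ⊤
  refine ⟨f, _, hf, hK, hKU, hμK, fun x hx => ?_, fun x hx => ?_⟩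
  · have hmin : IsLocalMin f x := .of_forall fun y => (mem_singleton_iff.1 hx).trans_le (hf0 y)
    exact hmin.fderiv_eq_zero
  · rw [mem_singleton_iff.1 hx]
    exact hKdisc

/-- There exist `f : [0,1]² → ℝ` of class `C^{1,α}` for every `α ∈ (0,1)` and a compact set
`K ⊆ [0,1]²` of positive Lebesgue measure such that `∇f` vanishes on `K` and, for `L²`-a.e.
`x ∈ K`, the connected component of the level set `f⁻¹(f(x))` containing `x` is `{x}`. -/
theorem exists_C1Holder_critical_compact_with_singleton_components :
    ∃ (f : EuclideanSpace ℝ (Fin 2) → ℝ) (K : Set (EuclideanSpace ℝ (Fin 2))),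
      (∀ α ∈ Set.Ioo (0:ℝ) 1, IsC1Holder f α) ∧
      IsCompact K ∧ K ⊆ unitSquare ∧ 0 < volume K ∧
      (∀ x ∈ K, fderivWithin ℝ f unitSquare x = 0) ∧
      (∀ᵐ x ∂(volume.restrict K),
        connectedComponentIn (unitSquare ∩ f ⁻¹' {f x}) x = {x}) := by
  obtain ⟨f, K, hf, hK, hKsub, hμK, hcrit, hlevel⟩ :=
    exists_C1Holder_critical_compact_with_singleton_components_general volume
      isCompact_unitSquare.measurableSet
      (Measure.measure_pos_of_nonempty_interior _ nonempty_interior_unitSquare).ne'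
  refine ⟨f, K, fun α hα => ?_, hK, hKsub, hμK, fun x hx => ?_,
    ae_restrict_of_forall_mem hK.measurableSet fun x hx => ?_⟩
  · exact isC1Holder_of_contDiffOn (contDiff_infty.1 hf 2).contDiffOn (Ioo_subset_Icc_self hα)
  · rw [(hf.differentiable (by simp) x).fderivWithin (uniqueDiffOn_unitSquare x (hKsub hx)),
      hcrit x hx]
  · exact connectedComponentIn_eq_singleton_of_isTotallyDisconnected (hlevel x hx)
      inter_subset_right ⟨hKsub hx, rfl⟩
end
end
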